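/- For every integer n ≥ 4 there exists a digraph D with n vertices, exactly n arcs, and minimum outdegree equal to 1, such that every bipartition V(D) = V₁ ∪ V₂ satisfies min{e(V₁,V₂), e(V₂,V₁)} ≤ 1. (Such a digraph is obtained from the star K_{1,n−1} by adding one edge between two leaves, orienting the resulting unique triangle as a directed cycle, and orienting all remaining edges toward the center of the star.) -/

import Mathlib

open Finset

/-- Number of arcs of the digraph `A` directed from a vertex of `S` to a vertex of `T`. -/
def dArcs {V : Type} [Fintype V] [DecidableEq V] (A : V → V → Prop) [DecidableRel A]
    (S T : Finset V) : ℕ :=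
  ((S ×ˢ T).filter fun p => A p.1 p.2).card

/-- Outdegree of `x`. -/
def outDeg {V : Type} [Fintype V] (A : V → V → Prop) [DecidableRel A] (x : V) : ℕ :=
  (Finset.univ.filter fun y => A x y).card

/-- Indegree of `x`. -/
def inDeg {V : Type} [Fintype V] (A : V → V → Prop) [DecidableRel A] (x : V) : ℕ :=
  (Finset.univ.filter fun y => A y x).card

/-- Degree of `x`: outdegree plus indegree. -/
def deg {V : Type} [Fintype V] (A : V → V → Prop) [DecidableRel A] (x : V) : ℕ :=
  outDeg A x + inDeg A x

/-- `s(x) = max{d⁺(x) − d⁻(x), d⁻(x) − d⁺(x)}`. -/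
def sVal {V : Type} [Fintype V] (A : V → V → Prop) [DecidableRel A] (x : V) : ℤ :=
  max ((outDeg A x : ℤ) - (inDeg A x : ℤ)) ((inDeg A x : ℤ) - (outDeg A x : ℤ))

/-- The gap `θ(X₁,X₂) = (e(X₁,Y)+e(Y,X₂)) − (e(X₂,Y)+e(Y,X₁))`. -/
def gap {V : Type} [Fintype V] [DecidableEq V] (A : V → V → Prop) [DecidableRel A]
    (X₁ X₂ Y : Finset V) : ℤ :=
  ((dArcs A X₁ Y : ℤ) + (dArcs A Y X₂ : ℤ)) - ((dArcs A X₂ Y : ℤ) + (dArcs A Y X₁ : ℤ))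

/-- The successor map of the digraph: `0 → 1 → 2 → 0`, and every other vertex points to `0`. -/
def starNext (n : ℕ) (hn : 4 ≤ n) (x : Fin n) : Fin n :=
  if x.val = 0 then ⟨1, by omega⟩ else if x.val = 1 then ⟨2, by omega⟩ else ⟨0, by omega⟩

lemma starNext_ne_self (n : ℕ) (hn : 4 ≤ n) (x : Fin n) : x ≠ starNext n hn x := by
  intro h
  have := congrArg Fin.val h
  unfold starNext at this
  split_ifs at this <;> dsimp only at this <;> omega

/-- A digraph in which every vertex `x` has the single out-neighbour `f x` has outdegrees `1`. -/
lemma outDeg_functional {V : Type} [Fintype V] [DecidableEq V] (f : V → V) (x : V) :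
    outDeg (fun x y => y = f x) x = 1 := by
  simp [outDeg, Finset.filter_eq']

lemma dArcs_functional_univ {V : Type} [Fintype V] [DecidableEq V] (f : V → V) :
    dArcs (fun x y => y = f x) univ univ = Fintype.card V := by
  unfold dArcs
  rw [← Finset.card_univ]
  symm
  refine Finset.card_bij (fun x _ => (x, f x)) ?_ ?_ ?_
  · simp
  · intro a _ b _ h
    exact (Prod.ext_iff.mp h).1
  · rintro ⟨a, b⟩ h
    exact ⟨a, mem_univ _, by simp_all⟩

/-- At most one arc leaves the side of a bipartition that contains the centre `0`. -/
lemma dArcs_starNext_le_one (n : ℕ) (hn : 4 ≤ n) (S T : Finset (Fin n)) (hd : Disjoint S T)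
    (h0 : (⟨0, by omega⟩ : Fin n) ∈ S) :
    dArcs (fun x y => y = starNext n hn x) S T ≤ 1 := by
  have hST : ∀ x ∈ S, x ∉ T := fun x hS hT => Finset.disjoint_left.mp hd hS hT
  have tail : ∀ x, starNext n hn x ∈ T →
      x.val = 0 ∧ (⟨1, by omega⟩ : Fin n) ∈ T ∨ x.val = 1 := by
    intro x hx
    unfold starNext at hx
    split_ifs at hx with h h'
    · exact Or.inl ⟨h, hx⟩
    · exact Or.inr h'
    · exact absurd hx (hST _ h0)
  have not_one : ∀ x ∈ S, x.val = 1 → (⟨1, by omega⟩ : Fin n) ∉ T := by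
    intro x hx h
    have : x = ⟨1, by omega⟩ := Fin.ext h
    exact this ▸ hST x hx
  refine Finset.card_le_one.mpr ?_
  rintro ⟨a, _⟩ ha ⟨b, _⟩ hb
  simp only [mem_filter, mem_product] at ha hb
  obtain ⟨⟨haS, haT⟩, rfl⟩ := ha
  obtain ⟨⟨hbS, hbT⟩, rfl⟩ := hb
  have hab : a = b := by
    rcases tail a haT with ⟨ha, h1⟩ | ha <;> rcases tail b hbT with ⟨hb, h1'⟩ | hb
    · exact Fin.ext (ha.trans hb.symm)
    · exact absurd h1 (not_one b hbS hb)
    · exact absurd h1' (not_one a haS ha)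
    · exact Fin.ext (ha.trans hb.symm)
  rw [hab]

/-- For every `n ≥ 4` there is a digraph with `n` vertices, `n` arcs, minimum outdegree
exactly 1, such that every bipartition `V₁, V₂` satisfies
`min{e(V₁,V₂), e(V₂,V₁)} ≤ 1`. -/
theorem stmt17 (n : ℕ) (hn : 4 ≤ n) :
    ∃ (A : Fin n → Fin n → Prop) (inst : DecidableRel A),
      (∀ v, ¬ A v v) ∧
      @dArcs (Fin n) _ _ A inst Finset.univ Finset.univ = n ∧
      (∀ x, 1 ≤ @outDeg (Fin n) _ A inst x) ∧
      (∃ x, @outDeg (Fin n) _ A inst x = 1) ∧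
      (∀ V₁ V₂ : Finset (Fin n), V₁ ∪ V₂ = Finset.univ → Disjoint V₁ V₂ →
        min (@dArcs (Fin n) _ _ A inst V₁ V₂) (@dArcs (Fin n) _ _ A inst V₂ V₁) ≤ 1) := by
  refine ⟨fun x y => y = starNext n hn x, fun x y => decEq _ _, starNext_ne_self n hn, ?_,
    fun x => (outDeg_functional _ x).ge, ⟨⟨0, by omega⟩, outDeg_functional _ _⟩, ?_⟩
  · exact (dArcs_functional_univ (starNext n hn)).trans (Fintype.card_fin n)
  · intro V₁ V₂ hU hd
    have h0 : (⟨0, by omega⟩ : Fin n) ∈ V₁ ∪ V₂ := hU ▸ mem_univ _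
    rcases mem_union.mp h0 with h | h
    · exact (min_le_left _ _).trans (dArcs_starNext_le_one n hn V₁ V₂ hd h)
    · exact (min_le_right _ _).trans (dArcs_starNext_le_one n hn V₂ V₁ hd.symm h)
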